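/- arXiv:2406.02971 — 2 statements merged into one kernel-verified Lean document; each statement's English description precedes it below -/
import Mathlib

section
/- For every k ≥ 2, if L_k denotes the limit of minS_k(n)/n as n → ∞, then L_k ≥ minS_k(n)/n for every n ≥ 1. -/
/-!
Concatenating an occurrence of `u₁` in `w₁` with an occurrence of `u₂` in `w₂` gives an occurrence
of `u₁ ++ u₂` in `w₁ ++ w₂`, so `maxocc` is supermultiplicative under concatenation
(`maxocc_mul_le`). Cutting an optimal word of length `m + n` after `m` letters then shows that
`minS k` is superadditive (`minS_superadd`). Hence `minS k n / n ≤ minS k (m * n) / (m * n)` for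
all `m ≥ 1`, and letting `m → ∞` the right-hand side tends to `L`.
-/

open List Real

/-- `occ w u` is the number of occurrences of `u` as a subword (subsequence) of `w`,
i.e. the multiplicity of `u` among the `2^|w|` sublists of `w`. -/
def occ {α : Type*} [DecidableEq α] (w u : List α) : ℕ := w.sublists.count u

/-- `maxocc w` is the maximal number of occurrences of any subword of `w`. -/
noncomputable def maxocc {α : Type*} [DecidableEq α] (w : List α) : ℕ :=
  sSup {n : ℕ | ∃ u : List α, occ w u = n}

/-- `minS k n` is the minimal subword entropy `log₂ (maxocc w)` over words `w`
of length `n` over the alphabet `Fin k`. -/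
noncomputable def minS (k n : ℕ) : ℝ :=
  sInf {s : ℝ | ∃ w : List (Fin k), w.length = n ∧ s = Real.logb 2 (maxocc w)}

/-- The list `l.flatMap fun x => A.map (· ++ x)` is the form in which `List.sublists_append`
presents the sublists of a concatenation. -/
lemma count_mul_le_count_flatMap {α : Type*} [DecidableEq α] (A l : List (List α))
    (u v : List α) :
    A.count u * l.count v ≤ (l.flatMap fun x => A.map (· ++ x)).count (u ++ v) := by
  induction l with
  | nil => simp
  | cons x l ih =>
    rw [List.flatMap_cons, List.count_append]
    by_cases h : x = v
    · subst h
      have h1 : (A.map (· ++ x)).count (u ++ x) = A.count u :=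
        List.count_map_of_injective A (· ++ x) (List.append_left_injective x) u
      rw [h1, List.count_cons_self, Nat.mul_add]
      omega
    · rw [List.count_cons_of_ne h]
      omega

lemma occ_mul_le {α : Type*} [DecidableEq α] (w₁ w₂ u₁ u₂ : List α) :
    occ w₁ u₁ * occ w₂ u₂ ≤ occ (w₁ ++ w₂) (u₁ ++ u₂) := by
  unfold occ
  rw [List.sublists_append]
  exact count_mul_le_count_flatMap _ _ _ _

lemma occ_bddAbove {α : Type*} [DecidableEq α] (w : List α) :
    BddAbove {n : ℕ | ∃ u : List α, occ w u = n} := by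
  refine ⟨w.sublists.length, ?_⟩
  rintro n ⟨u, rfl⟩
  exact List.count_le_length

lemma occ_le_maxocc {α : Type*} [DecidableEq α] (w u : List α) : occ w u ≤ maxocc w :=
  le_csSup (occ_bddAbove w) ⟨u, rfl⟩

lemma exists_occ_eq_maxocc {α : Type*} [DecidableEq α] (w : List α) :
    ∃ u, occ w u = maxocc w :=
  Nat.sSup_mem (s := {n : ℕ | ∃ u : List α, occ w u = n}) ⟨_, [], rfl⟩ (occ_bddAbove w)

lemma maxocc_pos {α : Type*} [DecidableEq α] (w : List α) : 0 < maxocc w := by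
  refine lt_of_lt_of_le ?_ (occ_le_maxocc w [])
  exact List.count_pos_iff.2 (List.mem_sublists.2 (List.nil_sublist w))

lemma maxocc_mul_le {α : Type*} [DecidableEq α] (w₁ w₂ : List α) :
    maxocc w₁ * maxocc w₂ ≤ maxocc (w₁ ++ w₂) := by
  obtain ⟨u₁, h₁⟩ := exists_occ_eq_maxocc w₁
  obtain ⟨u₂, h₂⟩ := exists_occ_eq_maxocc w₂
  rw [← h₁, ← h₂]
  exact (occ_mul_le w₁ w₂ u₁ u₂).trans (occ_le_maxocc _ _)

lemma minS_le {k : ℕ} (w : List (Fin k)) : minS k w.length ≤ Real.logb 2 (maxocc w) := by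
  refine csInf_le ⟨0, ?_⟩ ⟨w, rfl, rfl⟩
  rintro s ⟨v, -, rfl⟩
  exact Real.logb_nonneg (by norm_num) (by exact_mod_cast maxocc_pos v)

/-- A nonempty alphabet ensures that words of every length exist, so that the infimum defining
`minS k (m + n)` is taken over a nonempty set. -/
lemma minS_superadd {k : ℕ} (hk : 0 < k) (m n : ℕ) :
    minS k m + minS k n ≤ minS k (m + n) := by
  refine le_csInf ⟨_, List.replicate (m + n) ⟨0, hk⟩, List.length_replicate, rfl⟩ ?_
  rintro s ⟨w, hw, rfl⟩
  have h₁ := minS_le (w.take m)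
  have h₂ := minS_le (w.drop m)
  rw [List.length_take, hw, Nat.min_eq_left (Nat.le_add_right m n)] at h₁
  rw [List.length_drop, hw, Nat.add_sub_cancel_left] at h₂
  have hmul := maxocc_mul_le (w.take m) (w.drop m)
  rw [List.take_append_drop] at hmul
  have p₁ : (0 : ℝ) < maxocc (w.take m) := by exact_mod_cast maxocc_pos _
  have p₂ : (0 : ℝ) < maxocc (w.drop m) := by exact_mod_cast maxocc_pos _
  calc minS k m + minS k n
      ≤ Real.logb 2 (maxocc (w.take m)) + Real.logb 2 (maxocc (w.drop m)) := add_le_add h₁ h₂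
    _ = Real.logb 2 (maxocc (w.take m) * maxocc (w.drop m)) :=
        (Real.logb_mul p₁.ne' p₂.ne').symm
    _ ≤ Real.logb 2 (maxocc w) :=
        Real.logb_le_logb_of_le (by norm_num) (mul_pos p₁ p₂) (by exact_mod_cast hmul)

lemma mul_minS_le {k : ℕ} (hk : 0 < k) (n m : ℕ) :
    ((m + 1 : ℕ) : ℝ) * minS k n ≤ minS k ((m + 1) * n) := by
  induction m with
  | zero => simp
  | succ m ih =>
    have h := minS_superadd hk ((m + 1) * n) n
    rw [← Nat.succ_mul] at h
    push_cast at ih ⊢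
    linarith

theorem stmt_7 (k : ℕ) (hk : 2 ≤ k) (L : ℝ)
    (hL : Filter.Tendsto (fun n : ℕ => minS k n / n) Filter.atTop (nhds L)) :
    ∀ n : ℕ, 1 ≤ n → L ≥ minS k n / n := by
  intro n hn
  have hsub : Filter.Tendsto (fun m : ℕ => (m + 1) * n) Filter.atTop Filter.atTop :=
    Filter.tendsto_atTop_mono (fun m => show m ≤ (m + 1) * n by nlinarith) Filter.tendsto_id
  refine ge_of_tendsto' (hL.comp hsub) fun m => ?_
  have hn0 : (0 : ℝ) < n := by exact_mod_cast hn
  have h := mul_minS_le (by omega : 0 < k) n m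
  simp only [Function.comp]
  push_cast at h ⊢
  rw [div_le_div_iff₀ hn0 (by positivity)]
  nlinarith
end

section
/- For every m ≥ 0 and the binary word w = (01)^m (the m-fold repetition of 01), there exists r ≥ 0 such that occ(w, (01)^r) = maxocc(w); that is, some most frequent subword of (01)^m has the form (01)^r. -/
/-!
Deleting the first block `01` of `(01)^(m+1)` gives recursions in `m` for the number of occurrences
of a word, depending on its first letter. Together with Pascal's rule they show that a word of
length `k` occurs at most `C(m + ⌊k/2⌋, k)` times in `(01)^m` (`occ_blocks_le`), while `(01)^r`
occurs exactly `C(m + r, 2r)` times (`occ_blocks_alternating`). For `k = 2r` the bound is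
therefore attained by `(01)^r`; for `k = 2r + 1`, Pascal's rule gives
`C(m + r, 2r + 1) ≤ C(m + r + 1, 2r + 2)`, and the right side is attained by `(01)^(r+1)`.
So every word is dominated by some `(01)^r`, in particular a most frequent one.
-/

open List Real

/-- `rep v m` is the concatenation of `m` copies of the word `v`. -/
def rep {α : Type*} (v : List α) (m : ℕ) : List α := (List.replicate m v).flatten

section Recursion

variable {α : Type*} [DecidableEq α]

lemma occ_eq_count_sublists' (w u : List α) : occ w u = w.sublists'.count u :=
  (List.sublists_perm_sublists' w).count_eq u

lemma occ_nil_right (w : List α) : occ w [] = 1 := by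
  rw [occ_eq_count_sublists']
  induction w with
  | nil => simp
  | cons a w ih =>
    rw [List.sublists'_cons, List.count_append, ih, List.count_eq_zero_of_not_mem (by simp)]

lemma occ_nil_cons (b : α) (u : List α) : occ [] (b :: u) = 0 := by
  simp [occ]

lemma occ_cons_self (a : α) (w u : List α) :
    occ (a :: w) (a :: u) = occ w (a :: u) + occ w u := by
  simp only [occ_eq_count_sublists', List.sublists'_cons, List.count_append]
  rw [List.count_map_of_injective _ _ (List.cons_injective)]

lemma occ_cons_of_ne {a b : α} (h : a ≠ b) (w u : List α) :
    occ (a :: w) (b :: u) = occ w (b :: u) := by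
  simp only [occ_eq_count_sublists', List.sublists'_cons, List.count_append]
  rw [List.count_eq_zero_of_not_mem (l := List.map _ _), add_zero]
  simp [h]

end Recursion

lemma rep_succ {α : Type*} (v : List α) (m : ℕ) : rep v (m + 1) = v ++ rep v m := by
  simp [rep, List.replicate_succ]

/-- `W m` is the word `(01)^m`. -/
local notation "W" => rep ([0, 1] : List (Fin 2))

lemma occ_blocks_one (m : ℕ) (v : List (Fin 2)) :
    occ (W (m + 1)) (1 :: v) = occ (W m) (1 :: v) + occ (W m) v := by
  rw [rep_succ]
  change occ (0 :: 1 :: W m) (1 :: v) = _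
  rw [occ_cons_of_ne (by decide), occ_cons_self]

lemma occ_blocks_zero_one (m : ℕ) (v : List (Fin 2)) :
    occ (W (m + 1)) (0 :: 1 :: v) =
      occ (W m) (0 :: 1 :: v) + (occ (W m) (1 :: v) + occ (W m) v) := by
  rw [rep_succ]
  change occ (0 :: 1 :: W m) (0 :: 1 :: v) = _
  rw [occ_cons_self, occ_cons_of_ne (by decide), occ_cons_self]

lemma occ_blocks_zero_zero (m : ℕ) (v : List (Fin 2)) :
    occ (W (m + 1)) (0 :: 0 :: v) = occ (W m) (0 :: 0 :: v) + occ (W m) (0 :: v) := by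
  rw [rep_succ]
  change occ (0 :: 1 :: W m) (0 :: 0 :: v) = _
  rw [occ_cons_self, occ_cons_of_ne (by decide), occ_cons_of_ne (by decide)]

lemma occ_blocks_zero (m : ℕ) : occ (W (m + 1)) [0] = occ (W m) [0] + 1 := by
  rw [rep_succ]
  change occ (0 :: 1 :: W m) [0] = _
  rw [occ_cons_self, occ_cons_of_ne (by decide), occ_nil_right]

/-- The first conjunct is needed to carry the induction: words starting with `1` obey a bound that
is stronger by one unit in the upper index when their length is even. -/
lemma occ_blocks_le (m : ℕ) :
    (∀ v : List (Fin 2),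
      occ (W m) (1 :: v) ≤ (m + v.length / 2).choose (v.length + 1)) ∧
    (∀ u : List (Fin 2), occ (W m) u ≤ (m + u.length / 2).choose u.length) := by
  induction m with
  | zero =>
    constructor
    · intro v
      simp [rep, occ_nil_cons]
    · rintro (_ | ⟨b, u⟩)
      · simp [occ_nil_right]
      · simp [rep, occ_nil_cons]
  | succ m ih =>
    obtain ⟨ih1, ih⟩ := ih
    have one : ∀ v : List (Fin 2),
        occ (W (m + 1)) (1 :: v) ≤ (m + 1 + v.length / 2).choose (v.length + 1) := by
      intro v
      have h1 := ih1 v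
      have h2 := ih v
      rw [occ_blocks_one, show m + 1 + v.length / 2 = m + v.length / 2 + 1 by ring,
        Nat.choose_succ_succ']
      omega
    refine ⟨one, ?_⟩
    rintro (_ | ⟨b, u⟩)
    · simp [occ_nil_right]
    fin_cases b
    · rcases u with _ | ⟨c, v⟩
      · have h := ih [0]
        change occ (W (m + 1)) [0] ≤ _
        rw [occ_blocks_zero]
        simpa using h
      fin_cases c
      · change occ (W (m + 1)) (0 :: 0 :: v) ≤ _
        have h1 := ih (0 :: 0 :: v)
        have h2 := ih (0 :: v)
        simp only [List.length_cons] at h1 h2 ⊢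
        have h3 : (m + (v.length + 1) / 2).choose (v.length + 1) ≤
            (m + (v.length + 1 + 1) / 2).choose (v.length + 1) :=
          Nat.choose_le_choose _ (by omega)
        rw [occ_blocks_zero_zero,
          show m + 1 + (v.length + 1 + 1) / 2 = m + (v.length + 1 + 1) / 2 + 1 by ring,
          Nat.choose_succ_succ']
        omega
      · change occ (W (m + 1)) (0 :: 1 :: v) ≤ _
        have h1 := ih (0 :: 1 :: v)
        have h2 := ih1 v
        have h3 := ih v
        simp only [List.length_cons] at h1 ⊢
        rw [show m + (v.length + 1 + 1) / 2 = m + v.length / 2 + 1 by omega] at h1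
        rw [occ_blocks_zero_one,
          show m + 1 + (v.length + 1 + 1) / 2 = m + v.length / 2 + 1 + 1 by omega,
          Nat.choose_succ_succ', Nat.choose_succ_succ' (m + v.length / 2) v.length]
        omega
    · change occ (W (m + 1)) (1 :: u) ≤ _
      refine (one u).trans (Nat.choose_le_choose _ ?_)
      simp only [List.length_cons]
      omega

/-- The count for `1(01)^r` is what the recursion for `(01)^(r+1)` produces, so both are computed
simultaneously. -/
lemma occ_blocks_alternating (m : ℕ) : ∀ r : ℕ,
    occ (W m) (W r) = (m + r).choose (2 * r) ∧
    occ (W m) (1 :: W r) = (m + r).choose (2 * r + 1) := by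
  induction m with
  | zero =>
    rintro (_ | r)
    · simp [rep, occ_nil_right, occ_nil_cons]
    · rw [rep_succ]
      change occ [] (0 :: _) = _ ∧ occ [] (1 :: _) = _
      rw [occ_nil_cons, occ_nil_cons, Nat.choose_eq_zero_of_lt (by omega),
        Nat.choose_eq_zero_of_lt (by omega)]
      exact ⟨rfl, rfl⟩
  | succ m ih =>
    intro r
    constructor
    · rcases r with _ | r
      · simp [rep, occ_nil_right]
      · have h := (ih (r + 1)).1
        rw [rep_succ] at h ⊢
        change occ (W m) (0 :: 1 :: W r) = _ at h
        change occ (W (m + 1)) (0 :: 1 :: W r) = _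
        rw [occ_blocks_zero_one, h, (ih r).1, (ih r).2,
          show m + 1 + (r + 1) = m + r + 1 + 1 by ring,
          show m + (r + 1) = m + r + 1 by ring, show 2 * (r + 1) = 2 * r + 1 + 1 by ring,
          Nat.choose_succ_succ' (m + r + 1) (2 * r + 1), Nat.choose_succ_succ' (m + r) (2 * r)]
        omega
    · rw [occ_blocks_one, (ih r).1, (ih r).2, show m + 1 + r = m + r + 1 by ring,
        Nat.choose_succ_succ' (m + r) (2 * r)]
      omega

lemma exists_occ_le_occ_alternating (m : ℕ) (u : List (Fin 2)) :
    ∃ r : ℕ, occ (W m) u ≤ occ (W m) (W r) := by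
  have h := (occ_blocks_le m).2 u
  obtain ⟨r, hr | hr⟩ := Nat.even_or_odd' u.length
  · refine ⟨r, ?_⟩
    rw [(occ_blocks_alternating m r).1]
    rwa [hr, show 2 * r / 2 = r by omega] at h
  · refine ⟨r + 1, ?_⟩
    rw [(occ_blocks_alternating m (r + 1)).1, ← add_assoc,
      show 2 * (r + 1) = 2 * r + 1 + 1 by ring, Nat.choose_succ_succ']
    rw [hr, show (2 * r + 1) / 2 = r by omega] at h
    exact h.trans (Nat.le_add_right _ _)

theorem stmt_12 (m : ℕ) :
    ∃ r : ℕ, occ (rep ([0, 1] : List (Fin 2)) m) (rep [0, 1] r) =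
      maxocc (rep ([0, 1] : List (Fin 2)) m) := by
  -- Boundedness makes the supremum defining `maxocc` a genuine maximum.
  have bdd : BddAbove {n : ℕ | ∃ u : List (Fin 2), occ (W m) u = n} := by
    refine ⟨(W m).sublists.length, ?_⟩
    rintro n ⟨u, rfl⟩
    exact List.count_le_length
  have nonempty : {n : ℕ | ∃ u : List (Fin 2), occ (W m) u = n}.Nonempty := ⟨_, [], rfl⟩
  obtain ⟨u, hu⟩ := Nat.sSup_mem nonempty bdd
  obtain ⟨r, hr⟩ := exists_occ_le_occ_alternating m u
  refine ⟨r, le_antisymm (le_csSup bdd ⟨_, rfl⟩) ?_⟩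
  exact hu.symm.le.trans hr
end
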